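/- Let n ≥ 1, j ∈ {1,…,n} and l ∈ {0,…,n−j}. The map which sends ζ : (0,∞) → ℝ to the function s ↦ s^l ζ(s) + l ∫_s^∞ t^{l−1} ζ(t) dt is a bijection from T_j^n onto T_j^{n−l}, and its inverse sends ρ ∈ T_j^{n−l} to the function s ↦ ρ(s)/s^l − l ∫_s^∞ ρ(t)/t^{l+1} dt. -/

import Mathlib

open MeasureTheory Filter Set

/-- A function `ζ : (0,∞) → ℝ` (modeled as `ℝ → ℝ`, values on nonpositive reals irrelevant)
has bounded support. -/
def BddSupp (ζ : ℝ → ℝ) : Prop := ∃ R : ℝ, ∀ s, R ≤ s → ζ s = 0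

/-- `ζ ∈ T_j^n`: continuous on `(0,∞)` with bounded support and
`lim_{s → 0⁺} s^(n-j+1) ζ(s) = 0`. -/
def MemT (n j : ℕ) (ζ : ℝ → ℝ) : Prop :=
  ContinuousOn ζ (Set.Ioi 0) ∧ BddSupp ζ ∧
    Tendsto (fun s => s ^ (n - j + 1) * ζ s) (nhdsWithin 0 (Set.Ioi 0)) (nhds 0)

/-- The transform `𝓡^l ζ(s) = s^l ζ(s) + l ∫_s^∞ t^(l-1) ζ(t) dt`. -/
noncomputable def Rl (l : ℕ) (ζ : ℝ → ℝ) : ℝ → ℝ :=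
  fun s => s ^ l * ζ s + l * ∫ t in Set.Ioi s, t ^ (l - 1) * ζ t

/-- The inverse transform `𝓡^{-l} ρ(s) = ρ(s)/s^l − l ∫_s^∞ ρ(t)/t^(l+1) dt`. -/
noncomputable def RlInv (l : ℕ) (ρ : ℝ → ℝ) : ℝ → ℝ :=
  fun s => ρ s / s ^ l - l * ∫ t in Set.Ioi s, ρ t / t ^ (l + 1)

/-- A continuous function on `(0,∞)` vanishing for large arguments is integrable on every
`(s,∞)` with `s > 0`. -/
theorem ContinuousOn.integrableOn_Ioi_of_bddSupp {g : ℝ → ℝ} (hg : ContinuousOn g (Ioi 0))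
    (hR : BddSupp g) {s : ℝ} (hs : 0 < s) : IntegrableOn g (Ioi s) := by
  obtain ⟨R, hR⟩ := hR
  have hIcc : IntegrableOn g (Icc s R) :=
    (hg.mono fun x hx => lt_of_lt_of_le hs hx.1).integrableOn_Icc
  refine (hIcc.of_forall_sdiff_eq_zero measurableSet_Ioi fun x hx => hR x ?_)
  by_contra! h
  exact hx.2 ⟨le_of_lt hx.1, h.le⟩

/-- The tail integral of a function with bounded support has bounded support. -/
theorem BddSupp.integral_Ioi {g : ℝ → ℝ} (hR : BddSupp g) :
    BddSupp fun s => ∫ t in Ioi s, g t := by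
  obtain ⟨R, hR⟩ := hR
  exact ⟨R, fun s hs => setIntegral_eq_zero_of_forall_eq_zero fun t ht =>
    hR t (hs.trans (le_of_lt ht))⟩

theorem BddSupp.mul_left {g : ℝ → ℝ} (hR : BddSupp g) (f : ℝ → ℝ) :
    BddSupp fun s => f s * g s := by
  obtain ⟨R, hR⟩ := hR
  exact ⟨R, fun s hs => by simp [hR s hs]⟩

theorem BddSupp.div {g : ℝ → ℝ} (hR : BddSupp g) (f : ℝ → ℝ) :
    BddSupp fun s => g s / f s := by
  obtain ⟨R, hR⟩ := hR
  exact ⟨R, fun s hs => by simp [hR s hs]⟩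

theorem BddSupp.add {f g : ℝ → ℝ} (hf : BddSupp f) (hg : BddSupp g) :
    BddSupp fun s => f s + g s := by
  obtain ⟨R, hR⟩ := hf
  obtain ⟨S, hS⟩ := hg
  exact ⟨max R S, fun s hs => by
    simp [hR s ((le_max_left _ _).trans hs), hS s ((le_max_right _ _).trans hs)]⟩

theorem BddSupp.sub {f g : ℝ → ℝ} (hf : BddSupp f) (hg : BddSupp g) :
    BddSupp fun s => f s - g s := by
  simpa [sub_eq_add_neg] using hf.add (hg.mul_left fun _ => -1)

/-- The tail integral `s ↦ ∫_s^∞ g` has derivative `-g`. -/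
theorem hasDerivAt_integral_Ioi {g : ℝ → ℝ} (hg : ContinuousOn g (Ioi 0))
    (hR : BddSupp g) {s : ℝ} (hs : 0 < s) :
    HasDerivAt (fun x => ∫ t in Ioi x, g t) (-g s) s := by
  have hint : ∀ {x : ℝ}, 0 < x → IntegrableOn g (Ioi x) := fun hx =>
    hg.integrableOn_Ioi_of_bddSupp hR hx
  have hcont : ContinuousAt g s := hg.continuousAt (Ioi_mem_nhds hs)
  have hmeas : StronglyMeasurableAtFilter g (nhds s) :=
    hg.stronglyMeasurableAtFilter isOpen_Ioi s hs
  have hderiv : HasDerivAt (fun x => ∫ t in s..x, g t) (g s) s :=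
    intervalIntegral.integral_hasDerivAt_right (by simp) hmeas hcont
  refine (hderiv.const_sub (∫ t in Ioi s, g t)).congr_of_eventuallyEq ?_
  filter_upwards [Ioi_mem_nhds hs] with x hx
  linarith [intervalIntegral.integral_interval_add_Ioi (hint hs) (hint hx)]

/-- Recovering a function with bounded support from its derivative `-h`. -/
theorem integral_Ioi_eq_of_hasDerivAt_neg {H h : ℝ → ℝ} (hh : ContinuousOn h (Ioi 0))
    (hhs : BddSupp h) (hHs : BddSupp H) (hH : ∀ t > 0, HasDerivAt H (-h t) t)
    {s : ℝ} (hs : 0 < s) : ∫ t in Ioi s, h t = H s := by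
  obtain ⟨R, hR⟩ := hHs
  have hlim : Tendsto H atTop (nhds 0) :=
    tendsto_const_nhds.congr' (by
      filter_upwards [eventually_ge_atTop R] with t ht using (hR t ht).symm)
  have := integral_Ioi_of_hasDerivAt_of_tendsto' (fun t ht => hH t (lt_of_lt_of_le hs ht))
    (hh.integrableOn_Ioi_of_bddSupp hhs hs).neg hlim
  rw [integral_neg] at this
  linarith

/-- If `F' = -g` with `s ^ (k + 1) * g s` eventually small, then `s ^ k * F s` is eventually
bounded above by any positive number. -/
theorem eventually_pow_mul_lt_of_hasDerivAt {F g : ℝ → ℝ} {k : ℕ} (hk : 1 ≤ k)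
    (hF : ∀ t > 0, HasDerivAt F (-g t) t)
    (hg : Tendsto (fun s => s ^ (k + 1) * g s) (nhdsWithin 0 (Ioi 0)) (nhds 0))
    {ε : ℝ} (hε : 0 < ε) : ∀ᶠ s in nhdsWithin 0 (Ioi 0), s ^ k * F s < ε := by
  obtain ⟨δ, hδ, hδg⟩ := mem_nhdsGT_iff_exists_Ioc_subset.1
    (hg.eventually (gt_mem_nhds (half_pos hε)))
  have hδ : 0 < δ := hδ
  have hderiv : ∀ t > 0, HasDerivAt (fun s => ε / 2 * (s ^ k)⁻¹ - F s)
      (ε / 2 * (-(k * t ^ (k - 1)) / (t ^ k) ^ 2) + g t) t := fun t ht => by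
    simpa using
      (((hasDerivAt_pow k t).fun_inv (by positivity)).const_mul (ε / 2)).fun_sub (hF t ht)
  have hanti : AntitoneOn (fun s => ε / 2 * (s ^ k)⁻¹ - F s) (Ioc 0 δ) := by
    refine antitoneOn_of_hasDerivWithinAt_nonpos (convex_Ioc 0 δ)
      (fun t ht => (hderiv t ht.1).continuousAt.continuousWithinAt)
      (fun t ht => (hderiv t (interior_subset ht).1).hasDerivWithinAt) fun t ht => ?_
    have ht := interior_subset ht
    have ht0 : 0 < t := ht.1
    have hsmall : t ^ (k + 1) * g t < ε / 2 := hδg ht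
    have hrw : -(k * t ^ (k - 1)) / (t ^ k) ^ 2 = -k / t ^ (k + 1) := by
      obtain ⟨m, rfl⟩ := Nat.exists_eq_add_of_le' hk
      rw [Nat.add_sub_cancel]
      field_simp
      ring
    have hk' : (1 : ℝ) ≤ k := by exact_mod_cast hk
    have hpos : 0 < t ^ (k + 1) := by positivity
    have hgt : g t ≤ ε / 2 / t ^ (k + 1) := by
      rw [le_div_iff₀ hpos]; linarith
    have hle : ε / 2 / t ^ (k + 1) ≤ ε / 2 * (k / t ^ (k + 1)) := by
      rw [mul_div_assoc']
      gcongr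
      nlinarith
    rw [hrw, neg_div]
    linarith
  have hlim : Tendsto (fun s : ℝ => s ^ k * |F δ|) (nhdsWithin 0 (Ioi 0)) (nhds 0) := by
    have : Continuous fun s : ℝ => s ^ k * |F δ| := by fun_prop
    simpa [Nat.one_le_iff_ne_zero.1 hk] using (this.tendsto 0).mono_left nhdsWithin_le_nhds
  filter_upwards [Ioc_mem_nhdsGT hδ, hlim.eventually (gt_mem_nhds (half_pos hε))]
    with s hs hsF
  have hs0 : 0 < s := hs.1
  have hmono := hanti hs ⟨hδ, le_rfl⟩ hs.2
  have hpos : 0 ≤ ε / 2 * (δ ^ k)⁻¹ := by positivity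
  have hFs : F s ≤ ε / 2 * (s ^ k)⁻¹ + |F δ| := by
    have := le_abs_self (F δ)
    simp only at hmono
    linarith
  calc s ^ k * F s ≤ s ^ k * (ε / 2 * (s ^ k)⁻¹ + |F δ|) := by gcongr
    _ = ε / 2 + s ^ k * |F δ| := by field_simp
    _ < ε := by linarith

/-- If `s ^ (k + 1) * g s → 0` as `s → 0⁺`, then `s ^ k * ∫_s^∞ g → 0`. -/
theorem tendsto_pow_mul_integral_Ioi {g : ℝ → ℝ} {k : ℕ} (hk : 1 ≤ k)
    (hgc : ContinuousOn g (Ioi 0)) (hR : BddSupp g)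
    (hg : Tendsto (fun s => s ^ (k + 1) * g s) (nhdsWithin 0 (Ioi 0)) (nhds 0)) :
    Tendsto (fun s => s ^ k * ∫ t in Ioi s, g t) (nhdsWithin 0 (Ioi 0)) (nhds 0) := by
  have hF : ∀ t > 0, HasDerivAt (fun s => ∫ t in Ioi s, g t) (-g t) t := fun t ht =>
    hasDerivAt_integral_Ioi hgc hR ht
  rw [Metric.tendsto_nhds]
  intro ε hε
  filter_upwards [eventually_pow_mul_lt_of_hasDerivAt hk hF hg hε,
    eventually_pow_mul_lt_of_hasDerivAt (g := fun t => -g t) hk (fun t ht => (hF t ht).neg)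
      (by simpa using hg.neg) hε] with s h₁ h₂
  rw [Real.dist_eq, sub_zero, abs_lt]
  simp only [Pi.neg_apply] at h₂
  constructor <;> linarith

theorem continuousOn_integral_Ioi {g : ℝ → ℝ} (hg : ContinuousOn g (Ioi 0)) (hR : BddSupp g) :
    ContinuousOn (fun x => ∫ t in Ioi x, g t) (Ioi 0) := fun _ hs =>
  (hasDerivAt_integral_Ioi hg hR hs).continuousAt.continuousWithinAt

theorem ContinuousOn.div_pow_Ioi {ρ : ℝ → ℝ} (hρ : ContinuousOn ρ (Ioi 0)) (k : ℕ) :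
    ContinuousOn (fun t => ρ t / t ^ k) (Ioi 0) :=
  hρ.div (by fun_prop) fun t ht => pow_ne_zero k (ne_of_gt ht)

theorem MemT.rl {n j l : ℕ} (hl : l ≤ n - j) {ζ : ℝ → ℝ} (hζ : MemT n j ζ) :
    MemT (n - l) j (Rl l ζ) := by
  obtain ⟨hc, hb, ht⟩ := hζ
  have hgc : ContinuousOn (fun t => t ^ (l - 1) * ζ t) (Ioi 0) := by fun_prop
  have hgb : BddSupp fun t => t ^ (l - 1) * ζ t := hb.mul_left _
  refine ⟨?_, (hb.mul_left _).add (hgb.integral_Ioi.mul_left _), ?_⟩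
  · have := continuousOn_integral_Ioi hgc hgb
    unfold Rl
    fun_prop
  · have hfirst : Tendsto (fun s => s ^ (n - l - j + 1) * (s ^ l * ζ s))
        (nhdsWithin 0 (Ioi 0)) (nhds 0) := by
      convert ht using 2 with s
      rw [← mul_assoc, ← pow_add]
      congr 2
      omega
    rcases Nat.eq_zero_or_pos l with rfl | hl0
    · simpa [Rl] using hfirst
    have hsecond := tendsto_pow_mul_integral_Ioi (k := n - l - j + 1) (by omega) hgc hgb (by
      convert ht using 2 with s
      rw [← mul_assoc, ← pow_add]
      congr 2
      omega)
    convert hfirst.add (hsecond.const_mul (l : ℝ)) using 2 with s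
    · simp only [Rl]; ring
    · simp

theorem MemT.rlInv {n j l : ℕ} (hl : l ≤ n - j) {ρ : ℝ → ℝ} (hρ : MemT (n - l) j ρ) :
    MemT n j (RlInv l ρ) := by
  obtain ⟨hc, hb, ht⟩ := hρ
  have hgc := hc.div_pow_Ioi (l + 1)
  have hgb : BddSupp fun t => ρ t / t ^ (l + 1) := hb.div _
  have hdiv : ∀ i, Tendsto (fun s => s ^ (n - j + 1 + i) * (ρ s / s ^ (l + i)))
      (nhdsWithin 0 (Ioi 0)) (nhds 0) := fun i => by
    refine ht.congr' ?_
    filter_upwards [self_mem_nhdsWithin] with s hs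
    have hs0 : s ≠ 0 := ne_of_gt hs
    have hexp : n - j + 1 + i = n - l - j + 1 + (l + i) := by omega
    rw [hexp, pow_add s _ (l + i)]
    field_simp
  refine ⟨?_, (hb.div _).sub (hgb.integral_Ioi.mul_left _), ?_⟩
  · have := continuousOn_integral_Ioi hgc hgb
    have := hc.div_pow_Ioi l
    unfold RlInv
    fun_prop
  · have hsecond := tendsto_pow_mul_integral_Ioi (k := n - j + 1) (by omega) hgc hgb (hdiv 1)
    convert (hdiv 0).sub (hsecond.const_mul (l : ℝ)) using 2 with s
    · simp only [RlInv, add_zero]; ring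
    · simp

theorem rlInv_rl {l : ℕ} {ζ : ℝ → ℝ} (hc : ContinuousOn ζ (Ioi 0)) (hb : BddSupp ζ)
    {s : ℝ} (hs : 0 < s) : RlInv l (Rl l ζ) s = ζ s := by
  rcases Nat.eq_zero_or_pos l with rfl | hl0
  · simp [Rl, RlInv]
  have hgc : ContinuousOn (fun t => t ^ (l - 1) * ζ t) (Ioi 0) := by fun_prop
  have hgb : BddSupp fun t => t ^ (l - 1) * ζ t := hb.mul_left _
  have hFc := continuousOn_integral_Ioi hgc hgb
  have hRc : ContinuousOn (Rl l ζ) (Ioi 0) := by unfold Rl; fun_prop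
  have hRb : BddSupp (Rl l ζ) := (hb.mul_left _).add (hgb.integral_Ioi.mul_left _)
  have key : ∫ t in Ioi s, Rl l ζ t / t ^ (l + 1) =
      (∫ t in Ioi s, t ^ (l - 1) * ζ t) / s ^ l := by
    refine integral_Ioi_eq_of_hasDerivAt_neg
      (H := fun s => (∫ t in Ioi s, t ^ (l - 1) * ζ t) / s ^ l)
      (hRc.div_pow_Ioi (l + 1)) (hRb.div _)
      (hgb.integral_Ioi.div _) (fun t ht => ?_) hs
    have ht0 : t ≠ 0 := ne_of_gt ht
    refine ((hasDerivAt_integral_Ioi hgc hgb ht).fun_div (hasDerivAt_pow l t)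
      (pow_ne_zero l ht0)).congr_deriv ?_
    obtain ⟨m, rfl⟩ := Nat.exists_eq_add_of_le' hl0
    simp only [Rl, Nat.add_sub_cancel]
    field_simp
    ring
  have hs0 : s ≠ 0 := ne_of_gt hs
  rw [RlInv, key, Rl]
  field_simp
  ring

theorem rl_rlInv {l : ℕ} {ρ : ℝ → ℝ} (hc : ContinuousOn ρ (Ioi 0)) (hb : BddSupp ρ)
    {s : ℝ} (hs : 0 < s) : Rl l (RlInv l ρ) s = ρ s := by
  rcases Nat.eq_zero_or_pos l with rfl | hl0
  · simp [Rl, RlInv]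
  have hgc := hc.div_pow_Ioi (l + 1)
  have hgb : BddSupp fun t => ρ t / t ^ (l + 1) := hb.div _
  have hGc := continuousOn_integral_Ioi hgc hgb
  have hρc := hc.div_pow_Ioi l
  have hRc : ContinuousOn (RlInv l ρ) (Ioi 0) := by unfold RlInv; fun_prop
  have hRb : BddSupp (RlInv l ρ) := (hb.div _).sub (hgb.integral_Ioi.mul_left _)
  have key : ∫ t in Ioi s, t ^ (l - 1) * RlInv l ρ t =
      s ^ l * ∫ t in Ioi s, ρ t / t ^ (l + 1) := by
    refine integral_Ioi_eq_of_hasDerivAt_neg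
      (H := fun s => s ^ l * ∫ t in Ioi s, ρ t / t ^ (l + 1))
      (by fun_prop) (hRb.mul_left _)
      (hgb.integral_Ioi.mul_left _) (fun t ht => ?_) hs
    have ht0 : t ≠ 0 := ne_of_gt ht
    refine ((hasDerivAt_pow l t).fun_mul (hasDerivAt_integral_Ioi hgc hgb ht)).congr_deriv ?_
    obtain ⟨m, rfl⟩ := Nat.exists_eq_add_of_le' hl0
    simp only [RlInv, Nat.add_sub_cancel]
    field_simp
    ring
  have hs0 : s ≠ 0 := ne_of_gt hs
  rw [Rl, key, RlInv]
  field_simp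
  ring

theorem stmt2 (n j l : ℕ) (hn : 1 ≤ n) (hj1 : 1 ≤ j) (hjn : j ≤ n) (hl : l ≤ n - j) :
    (∀ ζ, MemT n j ζ → MemT (n - l) j (Rl l ζ)) ∧
    (∀ ρ, MemT (n - l) j ρ → MemT n j (RlInv l ρ)) ∧
    (∀ ζ, MemT n j ζ → ∀ s > (0:ℝ), RlInv l (Rl l ζ) s = ζ s) ∧
    (∀ ρ, MemT (n - l) j ρ → ∀ s > (0:ℝ), Rl l (RlInv l ρ) s = ρ s) :=
  ⟨fun _ hζ => hζ.rl hl, fun _ hρ => hρ.rlInv hl,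
    fun _ hζ _ hs => rlInv_rl hζ.1 hζ.2.1 hs, fun _ hρ _ hs => rl_rlInv hρ.1 hρ.2.1 hs⟩
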